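/- Let H be the group with presentation ⟨x, y | x y x⁻¹ = y⁻¹⟩ (the Klein bottle group). In the direct product H × H, both elements (y², 1) and (1, y²) belong to the normal closure of (y, y). Moreover, since y² ≠ 1 in H, the homomorphism H → (H × H)/⟪(y, y)⟫ sending h to the class of (h, 1) is not injective, and likewise the homomorphism sending h to the class of (1, h) is not injective. -/

import Mathlib

/-- The single defining relator `x y x⁻¹ y` of the Klein bottle group
`⟨x, y | x y x⁻¹ = y⁻¹⟩`, with generators indexed by `Bool`
(`true ↦ x`, `false ↦ y`). -/
def kleinRels : Set (FreeGroup Bool) :=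
  {FreeGroup.of true * FreeGroup.of false * (FreeGroup.of true)⁻¹ * FreeGroup.of false}

/-- The Klein bottle group `⟨x, y | x y x⁻¹ = y⁻¹⟩`. -/
def KleinBottleGroup : Type :=
  PresentedGroup kleinRels

instance : Group KleinBottleGroup :=
  QuotientGroup.Quotient.group _

/-- The generator `y` of the Klein bottle group. -/
def kleinY : KleinBottleGroup :=
  PresentedGroup.of false

/-!
Conjugating `(g, k)` by `(1, c)` changes only the second coordinate. If `c` inverts `k`, then
multiplying `(g, k)` by its conjugate `(g, k⁻¹)` cancels the second coordinate and squares the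
first. In the Klein bottle group `x` inverts `y`, and `y` survives with infinite order as a
rotation in the infinite dihedral group, so `y² ≠ 1`.
-/

section NormalSubgroup

variable {G K : Type*} [Group G] [Group K]

theorem sq_one_mem_of_isConj_inv {N : Subgroup (G × K)} [N.Normal] {g : G} {k : K}
    (hmem : (g, k) ∈ N) (hk : IsConj k k⁻¹) : (g ^ 2, 1) ∈ N := by
  obtain ⟨c, hc⟩ := isConj_iff.mp hk
  have hconj : (g, k⁻¹) ∈ N := by
    simpa [hc] using ‹N.Normal›.conj_mem _ hmem (1, c)
  simpa [sq] using N.mul_mem hmem hconj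

theorem one_sq_mem_of_isConj_inv {N : Subgroup (G × K)} [N.Normal] {g : G} {k : K}
    (hmem : (g, k) ∈ N) (hg : IsConj g g⁻¹) : (1, k ^ 2) ∈ N := by
  obtain ⟨c, hc⟩ := isConj_iff.mp hg
  have hconj : (g⁻¹, k) ∈ N := by
    simpa [hc] using ‹N.Normal›.conj_mem _ hmem (c, 1)
  simpa [sq] using N.mul_mem hmem hconj

theorem not_injective_mk_of_map_mem (f : G →* K) {N : Subgroup K} {g : G} (hg : g ≠ 1)
    (hmem : f g ∈ N) : ¬Function.Injective fun h => (QuotientGroup.mk (f h) : K ⧸ N) := by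
  intro hinj
  refine hg (hinj ?_)
  simpa [QuotientGroup.eq] using hmem

end NormalSubgroup

namespace KleinBottleGroup

/-- The universal property of the Klein bottle group: the homomorphism sending the generators `x`
and `y` to elements `a` and `b` with `a b a⁻¹ = b⁻¹`. -/
def lift {G : Type*} [Group G] (a b : G) (h : a * b * a⁻¹ = b⁻¹) : KleinBottleGroup →* G :=
  PresentedGroup.toGroup (rels := kleinRels) (f := fun i => if i then a else b) <| by
    rintro _ rfl
    simp [h]

theorem lift_kleinY {G : Type*} [Group G] (a b : G) (h : a * b * a⁻¹ = b⁻¹) :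
    lift a b h kleinY = b :=
  PresentedGroup.toGroup.of _

theorem isConj_kleinY_inv : IsConj kleinY kleinY⁻¹ := by
  let x : KleinBottleGroup := PresentedGroup.of (rels := kleinRels) true
  have relator_eq_one : x * kleinY * x⁻¹ * kleinY = 1 :=
    PresentedGroup.one_of_mem (rels := kleinRels) rfl
  exact isConj_iff.mpr ⟨x, eq_inv_of_mul_eq_one_left relator_eq_one⟩

/-- The homomorphism from the Klein bottle group onto the infinite dihedral group (the dihedral
group of index `0`) sending `x` to a reflection and `y` to the generating rotation. It detects
the order of `y`. -/
def toDihedral : KleinBottleGroup →* DihedralGroup 0 :=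
  lift (DihedralGroup.sr 0) (DihedralGroup.r 1) (by simp)

theorem toDihedral_kleinY : toDihedral kleinY = DihedralGroup.r 1 :=
  lift_kleinY _ _ _

theorem orderOf_kleinY : orderOf kleinY = 0 := by
  have hdvd : orderOf (toDihedral kleinY) ∣ orderOf kleinY := orderOf_map_dvd _ _
  rwa [toDihedral_kleinY, DihedralGroup.orderOf_r_one, zero_dvd_iff] at hdvd

theorem kleinY_sq_ne_one : kleinY ^ 2 ≠ 1 :=
  orderOf_eq_zero_iff'.mp orderOf_kleinY 2 two_pos

end KleinBottleGroup

/-- In `H × H`, where `H` is the Klein bottle group `⟨x, y | x y x⁻¹ = y⁻¹⟩`,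
the elements `(y², 1)` and `(1, y²)` lie in the normal closure of `(y, y)`;
moreover `y² ≠ 1` in `H`, and the maps `h ↦ (h, 1)` and `h ↦ (1, h)` into
`(H × H)/⟪(y, y)⟫` are not injective. -/
theorem stmt_13 :
    ((kleinY ^ 2, (1 : KleinBottleGroup)) ∈
      Subgroup.normalClosure {((kleinY, kleinY) : KleinBottleGroup × KleinBottleGroup)}) ∧
    (((1 : KleinBottleGroup), kleinY ^ 2) ∈
      Subgroup.normalClosure {((kleinY, kleinY) : KleinBottleGroup × KleinBottleGroup)}) ∧
    kleinY ^ 2 ≠ 1 ∧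
    ¬Function.Injective (fun h : KleinBottleGroup =>
      (QuotientGroup.mk (h, (1 : KleinBottleGroup)) :
        (KleinBottleGroup × KleinBottleGroup) ⧸
          Subgroup.normalClosure {((kleinY, kleinY) :
            KleinBottleGroup × KleinBottleGroup)})) ∧
    ¬Function.Injective (fun h : KleinBottleGroup =>
      (QuotientGroup.mk ((1 : KleinBottleGroup), h) :
        (KleinBottleGroup × KleinBottleGroup) ⧸
          Subgroup.normalClosure {((kleinY, kleinY) :
            KleinBottleGroup × KleinBottleGroup)})) := by
  have hmem : (kleinY, kleinY) ∈ Subgroup.normalClosure {(kleinY, kleinY)} :=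
    Subgroup.subset_normalClosure rfl
  have hleft := sq_one_mem_of_isConj_inv hmem KleinBottleGroup.isConj_kleinY_inv
  have hright := one_sq_mem_of_isConj_inv hmem KleinBottleGroup.isConj_kleinY_inv
  have hne := KleinBottleGroup.kleinY_sq_ne_one
  exact ⟨hleft, hright, hne,
    not_injective_mk_of_map_mem (MonoidHom.inl KleinBottleGroup KleinBottleGroup) hne hleft,
    not_injective_mk_of_map_mem (MonoidHom.inr KleinBottleGroup KleinBottleGroup) hne hright⟩
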